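/- arXiv:math-ph/0311041 — 2 statements merged into one kernel-verified Lean document; each statement's English description precedes it below -/
import Mathlib

section
/- Assume m > n and let i be an integer with 1 ≤ i ≤ 2N−1 and i ≠ N. Let q¹ᵢ = ∑_{s=0}^{m+n} aₛ·z^{(m+n−s)N+i}·w^{Ns} and q²ᵢ = ∑_{s=0}^{m+n} bₛ·w^{(m+n−s)N+i}·z^{Ns} be quasi-invariants with a₀ = b₀ = 1. If λ₁, λ₂ ∈ ℂ are such that λ₁·q¹ᵢ + λ₂·q²ᵢ belongs to the ideal I of Q generated by z·w and z^{2N}+w^{2N}, then λ₁ = λ₂ = 0. -/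
open MvPolynomial Finset

noncomputable section

/-- The polynomial ring `R = ℂ[z,w]`. -/
abbrev R2 : Type := MvPolynomial (Fin 2) ℂ

/-- `z`, the first variable. -/
def zP : R2 := X 0

/-- `w`, the second variable (playing the role of `z̄`). -/
def wP : R2 := X 1

/-- `ε = exp(πi/N)`, a primitive `2N`-th root of unity. -/
def eps (N : ℕ) : ℂ := Complex.exp ((Real.pi : ℂ) * Complex.I / (N : ℂ))

/-- The reflection `σⱼ : z ↦ ε^j w, w ↦ ε^{-j} z` as a `ℂ`-algebra endomorphism. -/
def dihRefl (N j : ℕ) : R2 →ₐ[ℂ] R2 :=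
  aeval (fun k : Fin 2 => if k = 0 then C (eps N ^ j) * X 1 else C (eps N ^ (-(j : ℤ))) * X 0)

/-- The multiplicity `mⱼ`: `m` for even `j`, `n` for odd `j`. -/
def mult (m n j : ℕ) : ℕ := if Even j then m else n

/-- Quasi-invariance for the dihedral system `I₂(2N)` with multiplicities `(m,n)`. -/
def IsQuasiInv (N m n : ℕ) (p : R2) : Prop :=
  ∀ j < 2 * N, (zP - C (eps N ^ j) * wP) ^ (2 * mult m n j + 1) ∣ dihRefl N j p - p

/-- Membership in the ideal `I` of the ring `Q` of quasi-invariants generated by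
`z·w` and `z^{2N}+w^{2N}`: an element of `Q` lies in `I` iff it can be written as
`u·(z·w) + v·(z^{2N}+w^{2N})` with `u, v ∈ Q`. -/
def MemIdealI (N m n : ℕ) (p : R2) : Prop :=
  ∃ u v : R2, IsQuasiInv N m n u ∧ IsQuasiInv N m n v ∧
    p = u * (zP * wP) + v * (zP ^ (2 * N) + wP ^ (2 * N))


/-- partial sums with step two -/
def stepSum (d : ℕ → ℂ) : ℕ → ℂ
  | 0 => d 0
  | 1 => d 1
  | (s + 2) => d (s + 2) + stepSum d s

lemma stepSum_parts (d g : ℕ → ℂ) (K : ℕ) :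
    ∑ s ∈ range (K + 2), d s * g s =
      ∑ s ∈ range K, stepSum d s * (g s - g (s + 2)) + stepSum d K * g K
        + stepSum d (K + 1) * g (K + 1) := by
  induction K with
  | zero => simp [Finset.sum_range_succ, stepSum]
  | succ K ih =>
    rw [Finset.sum_range_succ, ih, Finset.sum_range_succ _ K]
    simp only [stepSum]
    ring

lemma odd_powers_vanish (K m : ℕ) (h u : ℕ → ℂ) (β : ℂ) (hβ : β ≠ 0)
    (H : ∀ k < m + 1, ∑ s ∈ range K, h s * ((u s - β) ^ (2 * k) - (u s + β) ^ (2 * k)) = 0) :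
    ∀ k < m, ∑ s ∈ range K, h s * u s ^ (2 * k + 1) = 0 := by
  intro k
  induction k using Nat.strong_induction_on with
  | _ k ih =>
    intro hk
    have h1 := H (k + 1) (by omega)
    have h2 : ∀ s, h s * ((u s - β) ^ (2 * (k + 1)) - (u s + β) ^ (2 * (k + 1))) =
        ∑ i ∈ range (2 * (k + 1) + 1), (h s * u s ^ i) *
          (((-β) ^ (2 * (k + 1) - i) - β ^ (2 * (k + 1) - i)) * ((2 * (k + 1)).choose i : ℂ)) := by
      intro s
      rw [sub_eq_add_neg (u s) β, add_pow, add_pow, ← Finset.sum_sub_distrib, Finset.mul_sum]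
      refine Finset.sum_congr rfl fun i _ => ?_
      ring
    rw [Finset.sum_congr rfl fun s _ => h2 s, Finset.sum_comm] at h1
    simp_rw [← Finset.sum_mul] at h1
    rw [Finset.sum_eq_single (2 * k + 1)] at h1
    · have e1 : 2 * (k + 1) - (2 * k + 1) = 1 := by omega
      rw [e1, show 2 * (k + 1) = (2 * k + 1) + 1 by ring, Nat.choose_succ_self_right] at h1
      rcases mul_eq_zero.1 h1 with h1 | h1
      · exact h1
      · exfalso
        rcases mul_eq_zero.1 h1 with h1 | h1
        · apply hβ
          linear_combination (-1 / 2) * h1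
        · exact absurd h1 (Nat.cast_ne_zero.2 (by omega))
    · intro i hi hne
      rw [Finset.mem_range] at hi
      rcases Nat.even_or_odd i with he | ho
      · have : Even (2 * (k + 1) - i) := by
          rw [Nat.even_sub (by omega)]; simp [he]
        rw [this.neg_pow]; simp
      · obtain ⟨r, rfl⟩ := ho
        rw [ih r (by omega) (by omega)]; simp
    · intro hh
      exact absurd (Finset.mem_range.2 (by omega)) hh

lemma core_lin (n : ℕ) : ∀ (m : ℕ) (_ : n ≤ m) (α β : ℂ) (_ : β ≠ 0)
    (_ : ∀ s t : ℕ, (α + β * s) + (α + β * t) ≠ 0) (d : ℕ → ℂ)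
    (_ : ∀ k < m, ∑ s ∈ range (m + n), d s * (α + β * s) ^ (2 * k) = 0)
    (_ : ∀ k < n, ∑ s ∈ range (m + n), d s * ((-1) ^ s * (α + β * s) ^ (2 * k)) = 0),
    ∀ s < m + n, d s = 0 := by
  induction n with
  | zero =>
    intro m _ α β hβ hne d H _ s hs
    have inj : Function.Injective (fun s : Fin m => (α + β * (s : ℕ)) ^ 2) := by
      intro s t hst
      have h2 : ((α + β * (s : ℕ)) + (α + β * (t : ℕ))) * (β * ((s : ℕ) - (t : ℕ) : ℂ)) = 0 := by
        simp only at hst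
        linear_combination hst
      rcases mul_eq_zero.1 h2 with h2 | h2
      · exact absurd h2 (hne _ _)
      · rcases mul_eq_zero.1 h2 with h2 | h2
        · exact absurd h2 hβ
        · exact Fin.ext (by exact_mod_cast sub_eq_zero.1 h2)
    have := Matrix.eq_zero_of_forall_pow_sum_mul_pow_eq_zero
      (f := fun s : Fin m => (α + β * (s : ℕ)) ^ 2) (v := fun s : Fin m => d s) inj (by
        intro k
        have := H k k.2
        rw [add_zero, Finset.sum_range] at this
        simpa [pow_mul] using this)
    exact congrFun this ⟨s, by omega⟩
  | succ n ih =>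
    intro m hm α β hβ hne d H1 H2
    obtain ⟨m, rfl⟩ : ∃ m', m = m' + 1 := ⟨m - 1, by omega⟩
    obtain ⟨K, hK⟩ : ∃ K, K = m + n := ⟨_, rfl⟩
    have e1 : m + 1 + (n + 1) = K + 2 := by omega
    rw [e1] at H1 H2 ⊢
    set h := stepSum d with hh
    have a1 := H1 0 (by omega)
    have a2 := H2 0 (by omega)
    rw [stepSum_parts d (fun s => (α + β * s) ^ (2 * 0))] at a1
    rw [stepSum_parts d (fun s => (-1) ^ s * (α + β * s) ^ (2 * 0))] at a2
    simp [pow_add] at a1 a2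
    have hsq : ((-1 : ℂ) ^ K) * (-1) ^ K = 1 := by rw [← mul_pow]; simp
    have hK0 : h K = 0 := by
      linear_combination (1 / 2) * a1 + (1 / 2) * (-1 : ℂ) ^ K * a2 - (1/2) * (h K - h (K + 1)) * hsq
    have hK1 : h (K + 1) = 0 := by
      linear_combination a1 - hK0
    have key : ∀ s < m + n, h s * (α + β + β * s) = 0 := by
      refine ih m (by omega) (α + β) β hβ ?_ (fun s => h s * (α + β + β * s)) ?_ ?_
      · intro s t hst
        apply hne (s + 1) (t + 1)
        push_cast
        linear_combination hst
      · intro k hk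
        have := odd_powers_vanish K m h (fun s => α + β + β * s) β hβ ?_ k hk
        · rw [← hK]
          refine Eq.trans ?_ this
          exact Finset.sum_congr rfl fun s _ => by ring
        · intro k hk
          have b := H1 k hk
          rw [stepSum_parts d (fun s => (α + β * s) ^ (2 * k)), ← hh, hK0, hK1] at b
          refine Eq.trans ?_ b
          simp only [zero_mul, add_zero]
          refine Finset.sum_congr rfl fun s _ => ?_
          push_cast
          ring_nf
      · intro k hk
        have := odd_powers_vanish K n (fun s => (-1) ^ s * h s) (fun s => α + β + β * s) β hβ ?_ k hk
        · rw [← hK]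
          refine Eq.trans ?_ this
          exact Finset.sum_congr rfl fun s _ => by ring
        · intro k hk
          have b := H2 k hk
          rw [stepSum_parts d (fun s => (-1) ^ s * (α + β * s) ^ (2 * k)), ← hh, hK0, hK1] at b
          refine Eq.trans ?_ b
          simp only [zero_mul, add_zero]
          refine Finset.sum_congr rfl fun s _ => ?_
          rw [pow_add (-1 : ℂ) s 2]
          push_cast
          ring_nf
    have hz : ∀ s < K + 2, h s = 0 := by
      intro s hs
      by_cases h1 : s = K
      · rw [h1, hK0]
      by_cases h2 : s = K + 1
      · rw [h2, hK1]
      rcases mul_eq_zero.1 (key s (by omega)) with h3 | h3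
      · exact h3
      · exfalso
        apply hne (s + 1) (s + 1)
        push_cast
        linear_combination 2 * h3
    intro s hs
    match s, hs with
    | 0, hs => exact hz 0 hs
    | 1, hs => exact hz 1 hs
    | s + 2, hs =>
      have c1 := hz (s + 2) hs
      have c2 := hz s (by omega)
      rw [hh] at c1 c2
      simp only [stepSum] at c1
      rw [c2] at c1
      simpa using c1

/-- The Euler-type operator `2 t d/dt - e`. -/
def theta (e : ℂ) (p : Polynomial ℂ) : Polynomial ℂ :=
  Polynomial.C 2 * Polynomial.X * Polynomial.derivative p - Polynomial.C e * p

lemma theta_dvd (e : ℂ) (p : Polynomial ℂ) (K : ℕ)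
    (h : (Polynomial.X - 1 : Polynomial ℂ) ^ (K + 1) ∣ p) :
    (Polynomial.X - 1 : Polynomial ℂ) ^ K ∣ theta e p := by
  obtain ⟨r, rfl⟩ := h
  refine ⟨Polynomial.C 2 * Polynomial.X * ((K + 1 : Polynomial ℂ) * r +
    (Polynomial.X - 1) * Polynomial.derivative r) - Polynomial.C e * ((Polynomial.X - 1) * r), ?_⟩
  simp [theta, Polynomial.derivative_mul, Polynomial.derivative_pow]
  ring

lemma theta_sum (e : ℂ) (S : Finset ℕ) (c : ℕ → ℂ) (x : ℕ → ℕ) :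
    theta e (∑ q ∈ S, Polynomial.C (c q) * Polynomial.X ^ (x q)) =
      ∑ q ∈ S, Polynomial.C (c q * (2 * x q - e)) * Polynomial.X ^ (x q) := by
  simp only [theta, Polynomial.derivative_sum, Finset.mul_sum, ← Finset.sum_sub_distrib]
  refine Finset.sum_congr rfl fun q _ => ?_
  rcases Nat.eq_zero_or_pos (x q) with h | h
  · simp [h]; ring
  · obtain ⟨y, hy⟩ : ∃ y, x q = y + 1 := ⟨x q - 1, by omega⟩
    rw [hy]
    simp
    ring

lemma theta_sub (e : ℂ) (p q : Polynomial ℂ) : theta e (p - q) = theta e p - theta e q := by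
  simp [theta]; ring

lemma moments (e : ℂ) (S : Finset ℕ) (x y : ℕ → ℕ) (l : ℕ) : ∀ (K : ℕ) (_ : l < K) (c d : ℕ → ℂ)
    (_ : (Polynomial.X - 1 : Polynomial ℂ) ^ K ∣
      ∑ q ∈ S, Polynomial.C (c q) * Polynomial.X ^ (x q) -
      ∑ q ∈ S, Polynomial.C (d q) * Polynomial.X ^ (y q)),
    ∑ q ∈ S, c q * (2 * x q - e) ^ l = ∑ q ∈ S, d q * (2 * y q - e) ^ l := by
  induction l with
  | zero =>
    intro K hK c d h
    have h1 := (dvd_pow_self (Polynomial.X - 1 : Polynomial ℂ) (by omega : K ≠ 0)).trans h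
    rw [show (1 : Polynomial ℂ) = Polynomial.C 1 by simp, Polynomial.dvd_iff_isRoot] at h1
    simp [Polynomial.IsRoot, Polynomial.eval_finsetSum] at h1
    simpa [sub_eq_zero] using h1
  | succ l ih =>
    intro K hK c d h
    obtain ⟨K, rfl⟩ : ∃ k, K = k + 1 := ⟨K - 1, by omega⟩
    have h1 := theta_dvd e _ K h
    rw [theta_sub, theta_sum, theta_sum] at h1
    have := ih K (by omega) _ _ h1
    simp only [pow_succ']
    simpa only [mul_assoc] using this

/-- One-variable core. -/
lemma core_poly (N m n e : ℕ) (hN : 1 ≤ N) (hmn : n ≤ m) (he : e < (m + n) * N) (hNe : ¬ N ∣ e)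
    (γ : ℕ → ℂ)
    (H1 : (Polynomial.X - 1 : Polynomial ℂ) ^ (2 * m + 1) ∣
      ∑ q ∈ range (e + 1), Polynomial.C (if N ∣ q then γ q else 0) * Polynomial.X ^ q -
      ∑ q ∈ range (e + 1), Polynomial.C (if N ∣ q then γ q else 0) * Polynomial.X ^ (e - q))
    (H2 : (Polynomial.X - 1 : Polynomial ℂ) ^ (2 * n + 1) ∣
      ∑ q ∈ range (e + 1), Polynomial.C (if N ∣ q then (-1) ^ (q / N) * γ q else 0)
        * Polynomial.X ^ q -
      ∑ q ∈ range (e + 1), Polynomial.C (if N ∣ q then (-1) ^ (q / N) * γ q else 0)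
        * Polynomial.X ^ (e - q)) :
    γ 0 = 0 := by
  have conv : ∀ (c : ℕ → ℂ) (K : ℕ), (Polynomial.X - 1 : Polynomial ℂ) ^ (2 * K + 1) ∣
      ∑ q ∈ range (e + 1), Polynomial.C (if N ∣ q then c q else 0) * Polynomial.X ^ q -
      ∑ q ∈ range (e + 1), Polynomial.C (if N ∣ q then c q else 0) * Polynomial.X ^ (e - q) →
      ∀ k < K, ∑ s ∈ range (m + n), (if N * s ≤ e then c (N * s) else 0) *
        (-(e : ℂ) + (2 * N) * s) ^ (2 * k + 1) = 0 := by
    intro c K h k hk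
    have h1 := moments e _ (fun q => q) (fun q => e - q) (2 * k + 1) _ (by omega) _ _ h
    have h2 : ∑ q ∈ range (e + 1), (if N ∣ q then c q else 0) *
        (2 * ((e - q : ℕ) : ℂ) - e) ^ (2 * k + 1) =
        - ∑ q ∈ range (e + 1), (if N ∣ q then c q else 0) * (2 * (q : ℂ) - e) ^ (2 * k + 1) := by
      rw [← Finset.sum_neg_distrib]
      refine Finset.sum_congr rfl fun q hq => ?_
      rw [Finset.mem_range] at hq
      rw [Nat.cast_sub (by omega), show (2 * ((e : ℂ) - q) - e) = -(2 * (q : ℂ) - e) by ring,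
        Odd.neg_pow ⟨k, rfl⟩]
      ring
    rw [h2] at h1
    have h3 : ∑ q ∈ range (e + 1), (if N ∣ q then c q else 0) *
        (2 * (q : ℂ) - e) ^ (2 * k + 1) = 0 := by
      linear_combination (1 / 2) * h1
    refine Eq.trans ?_ h3
    simp only [ite_mul, zero_mul]
    rw [← Finset.sum_filter, ← Finset.sum_filter]
    refine Finset.sum_nbij' (fun s => N * s) (fun q => q / N) ?_ ?_ ?_ ?_ ?_
    · intro s hs
      simp only [Finset.mem_filter, Finset.mem_range] at hs ⊢
      exact ⟨by omega, dvd_mul_right _ _⟩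
    · intro q hq
      simp only [Finset.mem_filter, Finset.mem_range] at hq ⊢
      obtain ⟨hq, r, rfl⟩ := hq
      rw [Nat.mul_div_cancel_left _ (by omega)]
      refine ⟨?_, by omega⟩
      by_contra hcon
      have : (m + n) * N ≤ r * N := Nat.mul_le_mul_right _ (by omega)
      have h5 : r * N = N * r := mul_comm _ _
      omega
    · intro s _
      exact Nat.mul_div_cancel_left _ (by omega)
    · intro q hq
      simp only [Finset.mem_filter] at hq
      exact Nat.mul_div_cancel' hq.2
    · intro s _
      push_cast
      ring
  have hN0 : (N : ℂ) ≠ 0 := by exact_mod_cast (by omega)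
  have hx : ∀ s t : ℕ, (-(e : ℂ) + (2 * N) * s) + (-(e : ℂ) + (2 * N) * t) ≠ 0 := by
    intro s t h
    apply hNe
    refine ⟨s + t, ?_⟩
    have : (e : ℂ) = N * (s + t) := by linear_combination (-1 / 2) * h
    exact_mod_cast this
  have hMpos : 0 < m + n := by
    by_contra hc
    have : m + n = 0 := by omega
    rw [this] at he; omega
  have := core_lin n m hmn (-(e : ℂ)) (2 * N) (by simpa using hN0) hx
    (fun s => (if N * s ≤ e then γ (N * s) else 0) * (-(e : ℂ) + (2 * N) * s)) ?_ ?_ 0 hMpos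
  · have he0 : (e : ℂ) ≠ 0 := by
      intro h0
      apply hNe
      have : e = 0 := by exact_mod_cast h0
      simp [this]
    simpa [he0] using this
  · intro k hk
    refine Eq.trans ?_ (conv _ _ H1 k hk)
    exact Finset.sum_congr rfl fun s _ => by ring
  · intro k hk
    refine Eq.trans ?_ (conv _ _ H2 k hk)
    refine Finset.sum_congr rfl fun s _ => ?_
    rw [Nat.mul_div_cancel_left _ (by omega)]
    split_ifs <;> ring

lemma root_sum (N : ℕ) (hN : 1 ≤ N) (ζ : ℂ) (hζ : IsPrimitiveRoot ζ (2 * N)) (q : ℕ) :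
    ∑ l ∈ range N, ζ ^ (2 * l * q) = if N ∣ q then (N : ℂ) else 0 := by
  have h1 : ∀ l, ζ ^ (2 * l * q) = (ζ ^ (2 * q)) ^ l := by
    intro l; rw [← pow_mul]; congr 1; ring
  simp_rw [h1]
  split_ifs with h
  · have : ζ ^ (2 * q) = 1 := (hζ.pow_eq_one_iff_dvd _).2 (Nat.mul_dvd_mul_left 2 h)
    simp [this]
  · have hne : ζ ^ (2 * q) ≠ 1 := by
      intro h2
      exact h ((Nat.mul_dvd_mul_iff_left (by norm_num)).1 ((hζ.pow_eq_one_iff_dvd _).1 h2))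
    have h3 := mul_geom_sum (ζ ^ (2 * q)) N
    have h4 : (ζ ^ (2 * q)) ^ N = 1 := by
      rw [← pow_mul, show 2 * q * N = (2 * N) * q by ring, pow_mul, hζ.pow_eq_one, one_pow]
    rw [h4, sub_self] at h3
    exact (mul_eq_zero.1 h3).resolve_left (sub_ne_zero.2 hne)

lemma prim_pow_N (N : ℕ) (hN : 1 ≤ N) (ζ : ℂ) (hζ : IsPrimitiveRoot ζ (2 * N)) : ζ ^ N = -1 := by
  have h1 : (ζ ^ N) ^ 2 = 1 := by rw [← pow_mul, mul_comm, hζ.pow_eq_one]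
  rcases (mul_self_eq_one_iff.1 ((sq _).symm.trans h1)) with h | h
  · exfalso
    have := Nat.le_of_dvd (by omega) ((hζ.pow_eq_one_iff_dvd _).1 h)
    omega
  · exact h

lemma averaged (N m n e : ℕ) (hN : 1 ≤ N) (hmn : n ≤ m) (he : e < (m + n) * N) (hNe : ¬ N ∣ e)
    (γ : ℕ → ℂ) (ζ : ℂ) (hζ : IsPrimitiveRoot ζ (2 * N))
    (H : ∀ j < 2 * N, (Polynomial.X - 1 : Polynomial ℂ) ^ (2 * mult m n j + 1) ∣
      ∑ q ∈ range (e + 1), Polynomial.C (γ q * ζ ^ (j * q)) * Polynomial.X ^ q -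
      ∑ q ∈ range (e + 1), Polynomial.C (γ q * ζ ^ (j * q)) * Polynomial.X ^ (e - q)) :
    γ 0 = 0 := by
  have hN0 : (N : ℂ) ≠ 0 := Nat.cast_ne_zero.2 (by omega)
  have swap : ∀ (J : ℕ → ℕ) (x : ℕ → ℕ),
      ∑ l ∈ range N, ∑ q ∈ range (e + 1), Polynomial.C (γ q * ζ ^ (J l * q)) *
        (Polynomial.X : Polynomial ℂ) ^ (x q) =
      ∑ q ∈ range (e + 1), Polynomial.C (γ q * ∑ l ∈ range N, ζ ^ (J l * q)) *
        (Polynomial.X : Polynomial ℂ) ^ (x q) := by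
    intro J x
    rw [Finset.sum_comm]
    refine Finset.sum_congr rfl fun q _ => ?_
    rw [← Finset.sum_mul, Finset.mul_sum, map_sum]
  have key := core_poly N m n e hN hmn he hNe (fun q => γ q * N) ?_ ?_
  · simpa [hN0] using key
  · have h1 := Finset.dvd_sum (s := range N) (fun l hl => by
      have := H (2 * l) (by rw [Finset.mem_range] at hl; omega)
      rwa [mult, if_pos (even_two_mul l)] at this)
    rw [Finset.sum_sub_distrib, swap (fun l => 2 * l), swap (fun l => 2 * l)] at h1
    simp_rw [root_sum N hN ζ hζ, mul_ite, mul_zero] at h1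
    exact h1
  · have h1 := Finset.dvd_sum (s := range N) (fun l hl => by
      have := H (2 * l + 1) (by rw [Finset.mem_range] at hl; omega)
      rwa [mult, if_neg (by simp)] at this)
    rw [Finset.sum_sub_distrib, swap (fun l => 2 * l + 1), swap (fun l => 2 * l + 1)] at h1
    have h2 : ∀ q, γ q * ∑ l ∈ range N, ζ ^ ((2 * l + 1) * q) =
        if N ∣ q then (-1) ^ (q / N) * (γ q * N) else 0 := by
      intro q
      simp_rw [add_mul, one_mul, pow_add]
      rw [← Finset.sum_mul, root_sum N hN ζ hζ]
      split_ifs with hq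
      · obtain ⟨r, rfl⟩ := hq
        rw [Nat.mul_div_cancel_left _ (by omega), pow_mul, prim_pow_N N hN ζ hζ]
        ring
      · ring
    simp_rw [h2] at h1
    exact h1

/-- exponent vector -/
def mon (p q : ℕ) : Fin 2 →₀ ℕ := Finsupp.single 0 p + Finsupp.single 1 q

lemma eq_mon_iff (u : Fin 2 →₀ ℕ) (p q : ℕ) : u = mon p q ↔ u 0 = p ∧ u 1 = q := by
  constructor
  · rintro rfl; simp [mon]
  · rintro ⟨rfl, rfl⟩
    ext k
    fin_cases k <;> simp [mon]

/-- graded evaluation -/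
def gev (f g : Polynomial ℂ) : R2 →ₐ[ℂ] Polynomial (Polynomial ℂ) :=
  aeval ![Polynomial.C f * Polynomial.X, Polynomial.C g * Polynomial.X]

lemma gev_coeff (f g : Polynomial ℂ) (e : ℕ) (v : R2) :
    (gev f g v).coeff e =
      ∑ q ∈ range (e + 1), Polynomial.C (v.coeff (mon (e - q) q)) * f ^ (e - q) * g ^ q := by
  induction v using MvPolynomial.induction_on' with
  | monomial u a =>
    have h1 : gev f g (monomial u a) =
        Polynomial.C (Polynomial.C a * f ^ u 0 * g ^ u 1) * Polynomial.X ^ (u 0 + u 1) := by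
      rw [gev, aeval_monomial, Finsupp.prod_fintype _ _ (by simp)]
      simp [Fin.prod_univ_two, mul_pow, pow_add]
      ring
    rw [h1, Polynomial.coeff_C_mul, Polynomial.coeff_X_pow]
    simp only [coeff_monomial, eq_mon_iff]
    split_ifs with h
    · rw [Finset.sum_eq_single (u 1)]
      · rw [if_pos ⟨by omega, rfl⟩, show e - u 1 = u 0 by omega]; ring
      · intro q _ hq
        rw [if_neg (by tauto)]; simp
      · intro hh
        exact absurd (Finset.mem_range.2 (by omega)) hh
    · rw [Finset.sum_eq_zero]; · simp
      intro q hq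
      rw [Finset.mem_range] at hq
      rw [if_neg (by omega)]; simp
  | add p q hp hq =>
    simp only [map_add, Polynomial.coeff_add, coeff_add, hp, hq, add_mul, Finset.sum_add_distrib]

lemma eps_prim (N : ℕ) (hN : 1 ≤ N) : IsPrimitiveRoot (eps N) (2 * N) := by
  have := Complex.isPrimitiveRoot_exp (2 * N) (by omega)
  have hN0 : (N : ℂ) ≠ 0 := Nat.cast_ne_zero.2 (by omega)
  convert this using 1
  rw [eps]
  congr 1
  push_cast
  field_simp

lemma qi_coeff (N m n e : ℕ) (v : R2) (hv : IsQuasiInv N m n v) (j : ℕ)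
    (hj : j < 2 * N) :
    (Polynomial.X - 1 : Polynomial ℂ) ^ (2 * mult m n j + 1) ∣
      ∑ q ∈ range (e + 1), Polynomial.C (v.coeff (mon (e - q) q) * eps N ^ (j * (e - q)))
        * Polynomial.X ^ q -
      ∑ q ∈ range (e + 1), Polynomial.C (v.coeff (mon (e - q) q) * eps N ^ (j * (e - q)))
        * Polynomial.X ^ (e - q) := by
  have h0 : eps N ≠ 0 := Complex.exp_ne_zero _
  have h := map_dvd (gev (Polynomial.C (eps N ^ j) * Polynomial.X) 1) (hv j hj)
  have hcomp : (gev (Polynomial.C (eps N ^ j) * Polynomial.X) 1).comp (dihRefl N j) =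
      gev (Polynomial.C (eps N ^ j)) Polynomial.X := by
    apply MvPolynomial.algHom_ext
    intro k
    fin_cases k
    · simp [gev, dihRefl]
    · simp [gev, dihRefl, ← mul_assoc]
      rw [← map_pow, ← map_pow, ← map_mul,
        ← map_mul, inv_mul_cancel₀ (pow_ne_zero _ h0)]
      simp
  have hlin : gev (Polynomial.C (eps N ^ j) * Polynomial.X) 1 (zP - C (eps N ^ j) * wP) =
      Polynomial.C (Polynomial.X - 1) * (Polynomial.C (Polynomial.C (eps N ^ j)) * Polynomial.X) := by
    simp only [map_sub, map_mul, zP, wP, gev, aeval_X, aeval_C]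
    rw [show (algebraMap ℂ (Polynomial (Polynomial ℂ))) (eps N ^ j) =
        Polynomial.C (Polynomial.C (eps N ^ j)) from rfl]
    simp
    ring
  rw [map_pow, hlin, map_sub (gev _ _), ← AlgHom.comp_apply, hcomp, mul_pow, ← map_pow] at h
  have h2 := (Polynomial.C_dvd_iff_dvd_coeff _ _).1 ((dvd_mul_right _ _).trans h) e
  rw [Polynomial.coeff_sub, gev_coeff, gev_coeff] at h2
  convert h2 using 2
  · refine Finset.sum_congr rfl fun q _ => ?_
    simp [pow_mul]
  · refine Finset.sum_congr rfl fun q _ => ?_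
    simp [pow_mul, mul_pow]
    ring

lemma coeff_w (N m n e : ℕ) (hN : 1 ≤ N) (hmn : n ≤ m) (he : e < (m + n) * N) (hNe : ¬ N ∣ e)
    (v : R2) (hv : IsQuasiInv N m n v) : v.coeff (mon 0 e) = 0 := by
  have := averaged N m n e hN hmn he hNe (fun p => v.coeff (mon p (e - p))) (eps N)
    (eps_prim N hN) ?_
  · simpa using this
  · intro j hj
    have h := qi_coeff N m n e v hv j hj
    rw [← Finset.sum_range_reflect, ← Finset.sum_range_reflect (n := e + 1)
      (f := fun q => Polynomial.C (v.coeff (mon (e - q) q) * eps N ^ (j * (e - q)))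
        * Polynomial.X ^ (e - q)), ← dvd_neg, neg_sub] at h
    convert h using 2
    · refine Finset.sum_congr rfl fun q hq => ?_
      rw [Finset.mem_range] at hq
      rw [show e + 1 - 1 - q = e - q by omega, show e - (e - q) = q by omega]
    · refine Finset.sum_congr rfl fun q hq => ?_
      rw [Finset.mem_range] at hq
      rw [show e + 1 - 1 - q = e - q by omega, show e - (e - q) = q by omega]

lemma coeff_z (N m n e : ℕ) (hN : 1 ≤ N) (hmn : n ≤ m) (he : e < (m + n) * N) (hNe : ¬ N ∣ e)
    (v : R2) (hv : IsQuasiInv N m n v) : v.coeff (mon e 0) = 0 := by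
  have h0 : eps N ≠ 0 := Complex.exp_ne_zero _
  have := averaged N m n e hN hmn he hNe (fun q => v.coeff (mon (e - q) q)) (eps N)⁻¹
    (eps_prim N hN).inv ?_
  · simpa using this
  · intro j hj
    have h := (qi_coeff N m n e v hv j hj).mul_left (Polynomial.C ((eps N)⁻¹ ^ (j * e)))
    rw [mul_sub, Finset.mul_sum, Finset.mul_sum] at h
    have h3 : ∀ q ∈ range (e + 1), (eps N)⁻¹ ^ (j * e) * (v.coeff (mon (e - q) q) *
        eps N ^ (j * (e - q))) = v.coeff (mon (e - q) q) * (eps N)⁻¹ ^ (j * q) := by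
      intro q hq
      rw [Finset.mem_range] at hq
      obtain ⟨r, rfl⟩ : ∃ r, e = q + r := ⟨e - q, by omega⟩
      rw [Nat.add_sub_cancel_left, mul_add, pow_add]
      have : (eps N)⁻¹ ^ (j * r) * eps N ^ (j * r) = 1 := by
        rw [← mul_pow, inv_mul_cancel₀ h0, one_pow]
      linear_combination (eps N)⁻¹ ^ (j * q) * v.coeff (mon r q) * this
    convert h using 2
    · refine Finset.sum_congr rfl fun q hq => ?_
      rw [← mul_assoc, ← map_mul, h3 q hq]
    · refine Finset.sum_congr rfl fun q hq => ?_
      rw [← mul_assoc, ← map_mul, h3 q hq]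

/-- restriction to an axis -/
def axis (k : Fin 2) : R2 →ₐ[ℂ] Polynomial ℂ :=
  aeval (fun i => if i = k then Polynomial.X else 0)

lemma axis_coeff (k : Fin 2) (e : ℕ) (v : R2) :
    (axis k v).coeff e = v.coeff (Finsupp.single k e) := by
  induction v using MvPolynomial.induction_on' with
  | monomial u a =>
    rw [axis, aeval_monomial, Finsupp.prod_fintype _ _ (by simp), coeff_monomial]
    have hu : u = Finsupp.single k e ↔ u k = e ∧ u (1 - k) = 0 := by
      constructor
      · rintro rfl; fin_cases k <;> simp
      · rintro ⟨rfl, h⟩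
        ext i
        fin_cases k <;> fin_cases i <;> simp_all
    simp only [hu]
    fin_cases k <;>
    · simp [Fin.prod_univ_two, Polynomial.coeff_X_pow, zero_pow_eq]
      split_ifs <;> simp_all [Polynomial.coeff_X_pow] <;> (intro h; exact absurd h.symm (by assumption))
  | add p q hp hq =>
    simp only [map_add, Polynomial.coeff_add, coeff_add, hp, hq]

theorem q1i_q2i_span_not_mem_ideal (N m n i : ℕ) (hN : 1 ≤ N) (hmn : n < m)
    (hi1 : 1 ≤ i) (hi2 : i ≤ 2 * N - 1) (hiN : i ≠ N)
    (a b : ℕ → ℂ) (ha0 : a 0 = 1) (hb0 : b 0 = 1)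
    (hqa : IsQuasiInv N m n
      (∑ s ∈ Finset.range (m + n + 1),
        C (a s) * zP ^ ((m + n - s) * N + i) * wP ^ (N * s)))
    (hqb : IsQuasiInv N m n
      (∑ s ∈ Finset.range (m + n + 1),
        C (b s) * wP ^ ((m + n - s) * N + i) * zP ^ (N * s)))
    (l1 l2 : ℂ)
    (hmem : MemIdealI N m n
      (C l1 * (∑ s ∈ Finset.range (m + n + 1),
          C (a s) * zP ^ ((m + n - s) * N + i) * wP ^ (N * s))
       + C l2 * (∑ s ∈ Finset.range (m + n + 1),
          C (b s) * wP ^ ((m + n - s) * N + i) * zP ^ (N * s)))) :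
    l1 = 0 ∧ l2 = 0 := by
  obtain ⟨u, v, -, hv, h⟩ := hmem
  have hNi : ¬ N ∣ i := by
    rintro ⟨r, rfl⟩
    have h1 : r ≠ 0 := by rintro rfl; omega
    have h2 : r ≠ 1 := by rintro rfl; omega
    have : N * 2 ≤ N * r := Nat.mul_le_mul_left _ (by omega)
    omega
  have vz : ∀ e, e + 2 * N = (m + n) * N + i →
      v.coeff (mon e 0) = 0 ∧ v.coeff (mon 0 e) = 0 := by
    intro e he
    have h1 : ¬ N ∣ e := by
      intro hd
      apply hNi
      have h2 : N ∣ (m + n) * N + i := he ▸ dvd_add hd (dvd_mul_left _ _)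
      exact (Nat.dvd_add_right (dvd_mul_left _ _)).1 h2
    exact ⟨coeff_z N m n e hN hmn.le (by omega) h1 v hv,
      coeff_w N m n e hN hmn.le (by omega) h1 v hv⟩
  have main : ∀ w : Polynomial ℂ, (∀ e, e + 2 * N = (m + n) * N + i → w.coeff e = 0) →
      (w * Polynomial.X ^ (2 * N)).coeff ((m + n) * N + i) = 0 := by
    intro w hw
    rw [Polynomial.coeff_mul_X_pow']
    split_ifs with hle
    · exact hw _ (by omega)
    · rfl
  have hsum : ∀ c : ℕ → ℂ, c 0 = 1 → ∑ s ∈ range (m + n + 1), Polynomial.C (c s) *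
      (Polynomial.X : Polynomial ℂ) ^ ((m + n - s) * N + i) * 0 ^ (N * s) =
      Polynomial.X ^ ((m + n) * N + i) := by
    intro c hc
    rw [Finset.sum_eq_single 0]
    · simp [hc]
    · intro s _ hs
      rw [zero_pow (by positivity), mul_zero]
    · simp
  have hsum0 : ∀ c : ℕ → ℂ, ∑ s ∈ range (m + n + 1), Polynomial.C (c s) *
      (0 : Polynomial ℂ) ^ ((m + n - s) * N + i) * Polynomial.X ^ (N * s) = 0 := by
    intro c
    refine Finset.sum_eq_zero fun s _ => ?_
    rw [zero_pow (by omega)]; simp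
  have a00 : axis 0 zP = Polynomial.X := by simp [axis, zP]
  have a01 : axis 0 wP = 0 := by simp [axis, wP]
  have a10 : axis 1 zP = 0 := by simp [axis, zP]
  have a11 : axis 1 wP = Polynomial.X := by simp [axis, wP]
  have aC : ∀ k c, axis k (C c) = Polynomial.C c := by intro k c; simp [axis]
  have z2 : (0 : Polynomial ℂ) ^ (2 * N) = 0 := zero_pow (by omega)
  constructor
  · have h1 := congrArg (axis 0) h
    simp only [map_add, map_mul, map_sum, map_pow, a00, a01, aC, hsum a ha0, hsum0, z2] at h1
    have h2 := congrArg (fun p => Polynomial.coeff p ((m + n) * N + i)) h1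
    simp only [mul_zero, add_zero, zero_add] at h2
    rw [main _ (fun e he => by
      rw [axis_coeff]; simpa [mon] using (vz e he).1)] at h2
    simpa using h2
  · have h1 := congrArg (axis 1) h
    simp only [map_add, map_mul, map_sum, map_pow, a10, a11, aC, hsum b hb0, hsum0, z2] at h1
    have h2 := congrArg (fun p => Polynomial.coeff p ((m + n) * N + i)) h1
    simp only [mul_zero, zero_mul, add_zero, zero_add] at h2
    rw [main _ (fun e he => by
      rw [axis_coeff]; simpa [mon] using (vz e he).2)] at h2
    simpa using h2
end
end

section
/- Assume n ≤ m and let i be an integer with 1 ≤ i ≤ 2N−1 and i ≠ N. If q = ∑_{s=0}^{m+n} aₛ·z^{(m+n−s)N+i}·w^{Ns} with a₀ = 1 is quasi-invariant, then q is annihilated by the Calogero–Moser operator 𝓛₁; likewise, if q′ = ∑_{s=0}^{m+n} bₛ·w^{(m+n−s)N+i}·z^{Ns} with b₀ = 1 is quasi-invariant, then q′ is annihilated by 𝓛₁. -/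
open MvPolynomial Finset

noncomputable section

/-- `p` is annihilated by the Calogero–Moser operator
`𝓛₁ = 4∂z∂w − 4∑ₖ mₖ(ε^k ∂z − ∂w)/(ε^k w − z)`, expressed as a polynomial identity
after clearing denominators. -/
def AnnL1 (N m n : ℕ) (p : R2) : Prop :=
  (∏ k ∈ Finset.range (2 * N), (C (eps N ^ k) * wP - zP)) *
      (pderiv (0 : Fin 2) (pderiv (1 : Fin 2) p)) =
    ∑ k ∈ Finset.range (2 * N),
      C ((mult m n k : ℕ) : ℂ) *
        (∏ j ∈ (Finset.range (2 * N)).erase k, (C (eps N ^ j) * wP - zP)) *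
        (C (eps N ^ k) * pderiv (0 : Fin 2) p - pderiv (1 : Fin 2) p)

/-- twisted Euler operator -/
def th (c : ℂ) (p : Polynomial ℂ) : Polynomial ℂ :=
  Polynomial.X * Polynomial.derivative p + Polynomial.C c * p

/-- the linear factor of a mirror -/
def Lf (x : ℂ) : Polynomial ℂ := 1 - Polynomial.C x * Polynomial.X

lemma th_natDegree_le (c : ℂ) (p : Polynomial ℂ) (d : ℕ) (h : p.natDegree ≤ d) :
    (th c p).natDegree ≤ d := by
  unfold th
  refine Polynomial.natDegree_add_le_of_degree_le ?_ ?_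
  · by_cases h0 : p.natDegree = 0
    · rw [Polynomial.natDegree_eq_zero] at h0
      obtain ⟨x, rfl⟩ := h0
      simp
    · have h1 := Polynomial.natDegree_derivative_lt h0
      have h2 := Polynomial.natDegree_mul_le (p := (Polynomial.X : Polynomial ℂ))
        (q := Polynomial.derivative p)
      rw [Polynomial.natDegree_X] at h2
      omega
  · exact (Polynomial.natDegree_C_mul_le _ _).trans h

lemma th_coeff (c : ℂ) (p : Polynomial ℂ) (d : ℕ) :
    (th c p).coeff d = (d + c) * p.coeff d := by
  unfold th
  rcases d with _ | d
  · simp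
  · simp [Polynomial.coeff_X_mul, Polynomial.coeff_derivative]; ring

lemma th_dvd (c : ℂ) (L p : Polynomial ℂ) (k : ℕ) (h : L ^ (k + 1) ∣ p) : L ^ k ∣ th c p := by
  obtain ⟨q, rfl⟩ := h
  refine ⟨Polynomial.X * (((k : Polynomial ℂ) + 1) * Polynomial.derivative L * q + L * Polynomial.derivative q)
    + Polynomial.C c * (L * q), ?_⟩
  unfold th
  simp [Polynomial.derivative_pow]
  ring

lemma Lf_coprime_X (x : ℂ) : IsCoprime (Lf x) Polynomial.X :=
  ⟨1, Polynomial.C x, by unfold Lf; ring⟩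

lemma Lf_coprime {x y : ℂ} (h : x ≠ y) : IsCoprime (Lf x) (Lf y) := by
  have h' : y - x ≠ 0 := sub_ne_zero.mpr h.symm
  refine ⟨Polynomial.C ((y - x)⁻¹ * y), - Polynomial.C ((y - x)⁻¹ * x), ?_⟩
  have : Polynomial.C ((y - x)⁻¹) * (Polynomial.C y - Polynomial.C x) = 1 := by
    rw [← Polynomial.C_sub, ← Polynomial.C_mul, inv_mul_cancel₀ h', Polynomial.C_1]
  unfold Lf
  simp only [Polynomial.C_mul]
  linear_combination this

lemma Lf_natDegree {x : ℂ} (h : x ≠ 0) : (Lf x).natDegree = 1 := by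
  have : Lf x = Polynomial.C (-x) * Polynomial.X + Polynomial.C 1 := by
    unfold Lf; simp; ring
  rw [this]; exact Polynomial.natDegree_linear (neg_ne_zero.mpr h)

lemma Lf_ne (x : ℂ) : Lf x ≠ 0 := by
  intro h
  have := congrArg (Polynomial.eval 0) h
  simp [Lf] at this

lemma Lf_dvd {x : ℂ} (hx : x ≠ 0) (p : Polynomial ℂ) (h : p.eval x⁻¹ = 0) : Lf x ∣ p := by
  have h1 : Polynomial.X - Polynomial.C x⁻¹ ∣ p := Polynomial.dvd_iff_isRoot.mpr h
  refine dvd_trans ⟨- Polynomial.C x⁻¹, ?_⟩ h1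
  have : Polynomial.C x * Polynomial.C x⁻¹ = 1 := by
    rw [← Polynomial.C_mul, mul_inv_cancel₀ hx, Polynomial.C_1]
  unfold Lf
  linear_combination (-Polynomial.X) * this

lemma eval_of_Lf_dvd {x : ℂ} (hx : x ≠ 0) (p : Polynomial ℂ) (h : Lf x ∣ p) :
    p.eval x⁻¹ = 0 := by
  obtain ⟨q, rfl⟩ := h
  simp [Lf, hx]

lemma prod_log_deriv (S : Finset ℕ) (L : ℕ → Polynomial ℂ) (e : ℕ → ℕ) :
    (∏ k ∈ S, L k) * Polynomial.derivative (∏ k ∈ S, L k ^ e k) =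
      (∏ k ∈ S, L k ^ e k) *
        ∑ k ∈ S, (e k : Polynomial ℂ) * Polynomial.derivative (L k) * ∏ j ∈ S.erase k, L j := by
  rw [Polynomial.derivative_prod_finset, Finset.mul_sum, Finset.mul_sum]
  refine Finset.sum_congr rfl fun k hk => ?_
  rw [← Finset.mul_prod_erase S L hk, ← Finset.mul_prod_erase S (fun k => L k ^ e k) hk,
    Polynomial.derivative_pow]
  rcases h : e k with _ | d
  · simp
  · simp
    ring

lemma sum_mult (N m n : ℕ) : ∑ k ∈ Finset.range (2 * N), mult m n k = (m + n) * N := by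
  induction N with
  | zero => simp
  | succ N ih =>
    rw [show 2 * (N + 1) = 2 * N + 1 + 1 by ring, Finset.sum_range_succ, Finset.sum_range_succ, ih]
    have h1 : mult m n (2 * N) = m := by simp [mult]
    have h2 : mult m n (2 * N + 1) = n := by simp [mult]
    rw [h1, h2]; ring

lemma dvd_const (Q U : Polynomial ℂ) (d : ℕ) (hQ : Q ≠ 0) (hd : Q.natDegree = d)
    (hU : U.natDegree ≤ d) (h : Q ∣ U) (h0 : Q.coeff 0 = 1) : U = Polynomial.C (U.coeff 0) * Q := by
  obtain ⟨K, rfl⟩ := h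
  have hK : ∃ c, Polynomial.C c = K := by
    rw [← Polynomial.natDegree_eq_zero]
    by_cases hK : K = 0
    · simp [hK]
    · rw [Polynomial.natDegree_mul hQ hK] at hU
      omega
  obtain ⟨c, rfl⟩ := hK
  simp [h0, mul_comm]

lemma core (N m n i : ℕ) (hN : 1 ≤ N) (hi : 1 ≤ i) (ζ : ℂ) (hζ : IsPrimitiveRoot ζ (2 * N))
    (a : ℕ → ℂ) (ha : a 0 = 1)
    (A B : Polynomial ℂ)
    (hB : B = ∑ s ∈ Finset.range (m + n + 1), Polynomial.C (a s) * Polynomial.X ^ (N * s))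
    (hA : A = ∑ s ∈ Finset.range (m + n + 1),
      Polynomial.C (a s) * Polynomial.X ^ ((m + n - s) * N))
    (H : ∀ j < 2 * N, Lf (ζ ^ j) ^ (2 * mult m n j + 1) ∣
      Polynomial.C (ζ ^ (j * ((m + n) * N + i))) * Polynomial.X ^ i * A - B) (D : ℂ)
    (hD : D = ((m + n) * N + i : ℕ)) :
    (∏ k ∈ Finset.range (2 * N), Lf (ζ ^ k)) * (Polynomial.C D * th 0 B - th 0 (th 0 B)) =
      ∑ k ∈ Finset.range (2 * N), Polynomial.C ((mult m n k : ℕ) : ℂ) *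
        (∏ j ∈ (Finset.range (2 * N)).erase k, Lf (ζ ^ j)) *
        (th 0 B - Polynomial.C (ζ ^ k) * Polynomial.X * (Polynomial.C D * B - th 0 B)) := by
  have hζ0 : ζ ≠ 0 := hζ.ne_zero (by omega)
  have hζj : ∀ j, ζ ^ j ≠ 0 := fun j => pow_ne_zero _ hζ0
  set M := m + n with hM
  obtain ⟨cB, hcB⟩ : ∃ c : ℂ, c = - D / 2 := ⟨_, rfl⟩
  obtain ⟨cA, hcA⟩ : ∃ c : ℂ, c = i - D / 2 := ⟨_, rfl⟩
  obtain ⟨U, hU⟩ : ∃ U, U = th cA A * B - A * th cB B := ⟨_, rfl⟩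
  obtain ⟨U2, hU2⟩ : ∃ U, U = th cA (th cA A) * th cB B - th cA A * th cB (th cB B) := ⟨_, rfl⟩
  obtain ⟨Q, hQ⟩ : ∃ Q, Q = ∏ k ∈ Finset.range (2 * N), Lf (ζ ^ k) ^ (2 * mult m n k) := ⟨_, rfl⟩
  -- degrees
  have dB : B.natDegree ≤ M * N := by
    rw [hB]
    refine Polynomial.natDegree_sum_le_of_forall_le _ _ fun s hs => ?_
    refine (Polynomial.natDegree_C_mul_X_pow_le _ _).trans ?_
    rw [mul_comm]
    exact Nat.mul_le_mul_right _ (by have := Finset.mem_range.mp hs; omega)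
  have dA : A.natDegree ≤ M * N := by
    rw [hA]
    refine Polynomial.natDegree_sum_le_of_forall_le _ _ fun s hs => ?_
    refine (Polynomial.natDegree_C_mul_X_pow_le _ _).trans ?_
    exact Nat.mul_le_mul_right _ (by omega)
  have degmul : ∀ p q : Polynomial ℂ, p.natDegree ≤ M * N → q.natDegree ≤ M * N →
      (p * q).natDegree ≤ 2 * (M * N) := by
    intro p q hp hq
    exact Polynomial.natDegree_mul_le.trans (by omega)
  have dthA := th_natDegree_le cA A _ dA
  have dthB := th_natDegree_le cB B _ dB
  have dU : U.natDegree ≤ 2 * (M * N) := by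
    rw [hU]
    exact (Polynomial.natDegree_sub_le_iff_left (degmul _ _ dA dthB)).mpr (degmul _ _ dthA dB)
  have dU2 : U2.natDegree ≤ 2 * (M * N) := by
    rw [hU2]
    exact (Polynomial.natDegree_sub_le_iff_left
      (degmul _ _ dthA (th_natDegree_le cB _ _ dthB))).mpr
      (degmul _ _ (th_natDegree_le cA _ _ dthA) dthB)
  -- Q
  have Q0 : Q ≠ 0 := by
    rw [hQ]; exact Finset.prod_ne_zero_iff.mpr fun k _ => pow_ne_zero _ (Lf_ne _)
  have dQ : Q.natDegree = 2 * (M * N) := by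
    rw [hQ, Polynomial.natDegree_prod _ _ fun k _ => pow_ne_zero _ (Lf_ne _)]
    simp only [Polynomial.natDegree_pow, Lf_natDegree (hζj _), mul_one]
    rw [← Finset.mul_sum, sum_mult]
  have cQ : Q.coeff 0 = 1 := by
    rw [hQ, Polynomial.coeff_zero_eq_eval_zero, Polynomial.eval_prod]
    simp [Lf]
  -- divisibility
  have key : ∀ j < 2 * N, Lf (ζ ^ j) ^ (2 * mult m n j) ∣ U ∧
      Lf (ζ ^ j) ^ (2 * mult m n j) ∣ U2 := by
    intro j hj
    have h := H j hj
    obtain ⟨g, hg⟩ : ∃ g, g = ζ ^ (j * (M * N + i)) := ⟨_, rfl⟩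
    have g0 : g ≠ 0 := by rw [hg]; exact hζj _
    rw [← hg] at h
    set Hh := Polynomial.C g * Polynomial.X ^ i * A - B with hHh
    set L := Lf (ζ ^ j) with hL
    have red : ∀ (V : Polynomial ℂ) (k : ℕ), L ^ k ∣ Polynomial.C g * Polynomial.X ^ i * V →
        L ^ k ∣ V := by
      intro V k hV
      rw [mul_assoc] at hV
      have h1 : L ^ k ∣ Polynomial.X ^ i * V := by
        have := hV.mul_left (Polynomial.C g⁻¹)
        rwa [← mul_assoc, ← Polynomial.C_mul, inv_mul_cancel₀ g0, Polynomial.C_1, one_mul] at this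
      exact (((Lf_coprime_X _).pow_left).pow_right).dvd_of_dvd_mul_left h1
    have thX : ∀ V : Polynomial ℂ, th cB (Polynomial.C g * Polynomial.X ^ i * V) =
        Polynomial.C g * Polynomial.X ^ i * th cA V := by
      intro V
      have : cA = cB + i := by rw [hcA, hcB]; ring
      rw [this]
      unfold th
      obtain ⟨i', rfl⟩ : ∃ i', i = i' + 1 := ⟨i - 1, by omega⟩
      simp
      ring
    have thsub : ∀ p q : Polynomial ℂ, th cB (p - q) = th cB p - th cB q := by
      intro p q; unfold th; simp; ring
    have e1 : th cB Hh = Polynomial.C g * Polynomial.X ^ i * th cA A - th cB B := by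
      rw [hHh, thsub, thX]
    have e2 : th cB (th cB Hh) =
        Polynomial.C g * Polynomial.X ^ i * th cA (th cA A) - th cB (th cB B) := by
      rw [e1, thsub, thX]
    have d1 : L ^ (2 * mult m n j) ∣ th cB Hh := th_dvd _ _ _ _ h
    constructor
    · apply red
      have : Polynomial.C g * Polynomial.X ^ i * U = th cB Hh * B - Hh * th cB B := by
        rw [e1, hHh, hU]; ring
      rw [this]
      exact dvd_sub (d1.mul_right _) ((dvd_trans (pow_dvd_pow _ (by omega)) h).mul_right _)
    · rcases Nat.eq_zero_or_pos (mult m n j) with h0 | hpos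
      · rw [h0]; simp
      · apply red
        have : Polynomial.C g * Polynomial.X ^ i * U2 =
            th cB (th cB Hh) * th cB B - th cB Hh * th cB (th cB B) := by
          rw [e2, e1, hU2]; ring
        rw [this]
        obtain ⟨k, hk⟩ : ∃ k, 2 * mult m n j = k + 1 := ⟨2 * mult m n j - 1, by omega⟩
        rw [hk] at d1 ⊢
        have d2 : L ^ k ∣ th cB (th cB Hh) := th_dvd _ _ _ _ d1
        have root : L ∣ th cB B := by
          apply Lf_dvd (hζj j)
          have r1 : (th cB Hh).eval (ζ ^ j)⁻¹ = 0 :=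
            eval_of_Lf_dvd (hζj j) _ (dvd_trans (dvd_pow_self _ (by omega)) d1)
          rw [e1, Polynomial.eval_sub] at r1
          have r2 : (Polynomial.C g * Polynomial.X ^ i * th cA A).eval (ζ ^ j)⁻¹ =
              - (th cB B).eval (ζ ^ j)⁻¹ := by
            have thB : th cB B = ∑ s ∈ Finset.range (M + 1),
                Polynomial.C (((N * s : ℕ) + cB) * a s) * Polynomial.X ^ (N * s) := by
              ext d
              rw [th_coeff, hB, Polynomial.finsetSum_coeff, Polynomial.finsetSum_coeff,
                Finset.mul_sum]
              refine Finset.sum_congr rfl fun s _ => ?_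
              rw [Polynomial.coeff_C_mul_X_pow, Polynomial.coeff_C_mul_X_pow]
              split_ifs with hd
              · rw [hd]
              · simp
            have thA : th cA A = ∑ s ∈ Finset.range (M + 1),
                Polynomial.C ((((M - s) * N : ℕ) + cA) * a s) * Polynomial.X ^ ((M - s) * N) := by
              ext d
              rw [th_coeff, hA, Polynomial.finsetSum_coeff, Polynomial.finsetSum_coeff,
                Finset.mul_sum]
              refine Finset.sum_congr rfl fun s _ => ?_
              rw [Polynomial.coeff_C_mul_X_pow, Polynomial.coeff_C_mul_X_pow]
              split_ifs with hd
              · rw [hd]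
              · simp
            rw [thA, thB, Finset.mul_sum, Polynomial.eval_finsetSum, Polynomial.eval_finsetSum,
              ← Finset.sum_neg_distrib]
            refine Finset.sum_congr rfl fun s hs => ?_
            simp only [Polynomial.eval_mul, Polynomial.eval_C, Polynomial.eval_pow,
              Polynomial.eval_X]
            obtain ⟨r, hr⟩ : ∃ r, M = s + r := ⟨M - s, by have := Finset.mem_range.mp hs; omega⟩
            have hr' : M - s = r := by omega
            have hc : (((M - s) * N : ℕ) : ℂ) + cA = - ((N * s : ℕ) + cB) := by
              rw [hr', hcA, hcB, hD, hr]; push_cast; ring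
            rw [hc, hr', hg, hr]
            have hp : ζ ^ (j * ((s + r) * N + i)) * (ζ ^ j)⁻¹ ^ i * (ζ ^ j)⁻¹ ^ (r * N) =
                (ζ ^ j)⁻¹ ^ (N * s) := by
              have h1 : (ζ ^ j) ^ (2 * N * s) = 1 := by
                rw [← pow_mul, show j * (2 * N * s) = 2 * N * (j * s) by ring, pow_mul,
                  hζ.pow_eq_one, one_pow]
              have hz := hζj j
              rw [pow_mul]
              simp only [inv_pow]
              field_simp
              rw [← pow_add, ← pow_add,
                show (s + r) * N + i + N * s = 2 * N * s + (i + r * N) by ring, pow_add, h1,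
                one_mul]
            linear_combination (-((N * s : ℕ) + cB) * a s) * hp
          rw [r2] at r1
          linear_combination (-1 / 2 : ℂ) * r1
        refine dvd_sub ?_ (d1.mul_right _)
        rw [pow_succ]
        exact mul_dvd_mul d2 root
  have cop : ((Finset.range (2 * N) : Finset ℕ) : Set ℕ).Pairwise
      (Function.onFun IsCoprime fun k => Lf (ζ ^ k) ^ (2 * mult m n k)) := by
    intro x hx y hy hxy
    apply IsCoprime.pow
    apply Lf_coprime
    intro h
    exact hxy (hζ.pow_inj (by simpa using hx) (by simpa using hy) h)
  have QU : Q ∣ U := by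
    rw [hQ]; exact Finset.prod_dvd_of_coprime cop fun k hk => (key k (Finset.mem_range.mp hk)).1
  have QU2 : Q ∣ U2 := by
    rw [hQ]; exact Finset.prod_dvd_of_coprime cop fun k hk => (key k (Finset.mem_range.mp hk)).2
  have eU := dvd_const Q U _ Q0 dQ dU QU cQ
  have eU2 := dvd_const Q U2 _ Q0 dQ dU2 QU2 cQ
  have B0 : B.coeff 0 = 1 := by
    rw [hB, Polynomial.finsetSum_coeff, Finset.sum_eq_single 0]
    · simp [ha]
    · intro s _ hs
      rw [Polynomial.coeff_C_mul_X_pow, if_neg]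
      have : 0 < N * s := by positivity
      omega
    · simp
  have Atop : A.coeff (M * N) = 1 := by
    rw [hA, Polynomial.finsetSum_coeff, Finset.sum_eq_single 0]
    · simp [ha]
    · intro s hs hs0
      rw [Polynomial.coeff_C_mul_X_pow, if_neg]
      intro h
      have := Nat.eq_of_mul_eq_mul_right (by omega) h
      have := Finset.mem_range.mp hs
      omega
    · simp
  obtain ⟨κ, hκ⟩ : ∃ c : ℂ, c = D / 2 * (D / 2 - i) := ⟨_, rfl⟩
  have U2U : U2 = Polynomial.C κ * U := by
    rw [eU, eU2, ← mul_assoc, ← Polynomial.C_mul]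
    congr 2
    rw [hU, hU2]
    simp only [Polynomial.coeff_sub, Polynomial.mul_coeff_zero, th_coeff, B0]
    rw [hκ, hcA, hcB]
    push_cast
    ring
  have Une : U ≠ 0 := by
    intro h0
    have h1 : U.coeff (M * N + B.natDegree) = 0 := by rw [h0]; simp
    have dB' : (th cB B).natDegree ≤ B.natDegree := th_natDegree_le _ _ _ le_rfl
    rw [hU, Polynomial.coeff_sub, Polynomial.coeff_mul_add_eq_of_natDegree_le dthA le_rfl,
      Polynomial.coeff_mul_add_eq_of_natDegree_le dA dB', th_coeff, th_coeff, Atop] at h1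
    have h2 : (((M * N - B.natDegree + i : ℕ) : ℂ)) * B.coeff B.natDegree = 0 := by
      rw [← h1, hcA, hcB]
      push_cast [Nat.cast_sub dB]
      ring
    rcases mul_eq_zero.mp h2 with h | h
    · have := Nat.cast_eq_zero.mp h
      omega
    · have : B = 0 := Polynomial.leadingCoeff_eq_zero.mp h
      rw [this] at B0
      simp at B0
  -- Cramer
  have U1 : th cA (th cA A) * B - A * th cB (th cB B) = th (i - D) U := by
    rw [hU, hcA, hcB]
    have e : Polynomial.C (-D / 2 : ℂ) = - Polynomial.C (D / 2) := by
      rw [← Polynomial.C_neg]; congr 1; ring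
    have e' : Polynomial.C D = 2 * Polynomial.C (D / 2) := by
      rw [show (2 : Polynomial ℂ) = Polynomial.C 2 from rfl, ← Polynomial.C_mul]; congr 1; ring
    unfold th
    simp only [Polynomial.C_sub, e, e', Polynomial.derivative_add, Polynomial.derivative_sub,
      Polynomial.derivative_mul, Polynomial.derivative_X, Polynomial.derivative_C,
      Polynomial.derivative_neg]
    ring
  have cramer : B * U2 - th cB B * th (i - D) U + th cB (th cB B) * U = 0 := by
    rw [← U1, hU, hU2]; ring
  rw [U2U] at cramer
  obtain ⟨T, hT⟩ : ∃ T, T = ∏ k ∈ Finset.range (2 * N), Lf (ζ ^ k) := ⟨_, rfl⟩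
  have lg := prod_log_deriv (Finset.range (2 * N)) (fun k => Lf (ζ ^ k)) (fun k => 2 * mult m n k)
  rw [← hQ, ← hT] at lg
  obtain ⟨S, hS⟩ : ∃ S, S = ∑ k ∈ Finset.range (2 * N), Polynomial.C ((mult m n k : ℕ) : ℂ) *
    (∏ j ∈ (Finset.range (2 * N)).erase k, Lf (ζ ^ j)) * (1 + Polynomial.C (ζ ^ k) * Polynomial.X)
    := ⟨_, rfl⟩
  have sumT : ∑ k ∈ Finset.range (2 * N), Polynomial.C ((mult m n k : ℕ) : ℂ) *
    (∏ j ∈ (Finset.range (2 * N)).erase k, Lf (ζ ^ j)) * Lf (ζ ^ k)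
      = Polynomial.C (D - i) * T := by
    have : D - i = ((∑ k ∈ Finset.range (2 * N), mult m n k : ℕ) : ℂ) := by
      rw [sum_mult, ← hM, hD]; push_cast; ring
    rw [this, Nat.cast_sum, map_sum, Finset.sum_mul]
    refine Finset.sum_congr rfl fun k hk => ?_
    rw [hT, ← Finset.mul_prod_erase _ (fun k => Lf (ζ ^ k)) hk]
    ring
  have thQ : T * th (i - D) Q = - (S * Q) := by
    have e3 : Polynomial.X * (∑ k ∈ Finset.range (2 * N), ((2 * mult m n k : ℕ) : Polynomial ℂ) *
        Polynomial.derivative (Lf (ζ ^ k)) * ∏ j ∈ (Finset.range (2 * N)).erase k, Lf (ζ ^ j))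
        = Polynomial.C (D - i) * T - S := by
      rw [← sumT, hS, Finset.mul_sum, ← Finset.sum_sub_distrib]
      refine Finset.sum_congr rfl fun k hk => ?_
      have : Polynomial.derivative (Lf (ζ ^ k)) = - Polynomial.C (ζ ^ k) := by
        unfold Lf; simp [-map_pow]
      rw [this]
      conv_rhs => rw [Lf]
      push_cast
      simp only [map_natCast]
      ring
    have : Polynomial.C ((i : ℂ) - D) = - Polynomial.C (D - i) := by
      rw [← Polynomial.C_neg]; congr 1; ring
    unfold th
    rw [this]
    linear_combination Polynomial.X * lg + Q * e3
  have thU : T * th (i - D) U = - (S * U) := by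
    have : th (i - D) U = Polynomial.C (U.coeff 0) * th (i - D) Q := by
      conv_lhs => rw [eU]
      unfold th
      simp
      ring
    rw [this]
    conv_rhs => rw [eU]
    linear_combination Polynomial.C (U.coeff 0) * thQ
  have ode : T * (Polynomial.C κ * B + th cB (th cB B)) + th cB B * S = 0 := by
    apply mul_left_cancel₀ Une
    linear_combination T * cramer + th cB B * thU
  obtain ⟨c, hc⟩ : ∃ c, c = Polynomial.C (D / 2) := ⟨_, rfl⟩
  have e' : Polynomial.C D = 2 * c := by
    rw [hc, show (2 : Polynomial ℂ) = Polynomial.C 2 from rfl, ← Polynomial.C_mul]; congr 1; ring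
  have eB : ∀ p, th cB p = th 0 p - c * p := by
    intro p
    rw [hcB, hc]
    unfold th
    rw [neg_div, Polynomial.C_neg, Polynomial.C_0]; ring
  have e0 : th 0 (th 0 B - c * B) = th 0 (th 0 B) - c * th 0 B := by
    rw [hc]; unfold th; simp; ring
  have rhs : ∑ k ∈ Finset.range (2 * N), Polynomial.C ((mult m n k : ℕ) : ℂ) *
        (∏ j ∈ (Finset.range (2 * N)).erase k, Lf (ζ ^ j)) *
        (th 0 B - Polynomial.C (ζ ^ k) * Polynomial.X * (Polynomial.C D * B - th 0 B)) =
      S * th cB B + c * B * (Polynomial.C (D - i) * T) := by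
    rw [← sumT, hS, Finset.sum_mul, Finset.mul_sum, ← Finset.sum_add_distrib]
    refine Finset.sum_congr rfl fun k hk => ?_
    rw [eB, e']
    conv_rhs => rw [Lf]
    ring
  rw [rhs, ← hT]
  rw [eB, eB, e0] at ode
  rw [eB]
  have eκ : Polynomial.C κ = c * (c - Polynomial.C (i : ℂ)) := by
    rw [hκ, hc, Polynomial.C_mul, Polynomial.C_sub]
  rw [eκ] at ode
  rw [Polynomial.C_sub, e']
  linear_combination (-1 : Polynomial ℂ) * ode

lemma th_sum (c : ℂ) (S : Finset ℕ) (a : ℕ → ℂ) (f : ℕ → ℕ) :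
    th c (∑ s ∈ S, Polynomial.C (a s) * Polynomial.X ^ (f s)) =
      ∑ s ∈ S, Polynomial.C ((f s + c) * a s) * Polynomial.X ^ (f s) := by
  ext d
  rw [th_coeff, Polynomial.finsetSum_coeff, Polynomial.finsetSum_coeff, Finset.mul_sum]
  refine Finset.sum_congr rfl fun s _ => ?_
  rw [Polynomial.coeff_C_mul_X_pow, Polynomial.coeff_C_mul_X_pow]
  split_ifs with hd
  · rw [hd]
  · simp

/-- `core`, evaluated at a point. -/
lemma core_eval (N m n i : ℕ) (hN : 1 ≤ N) (hi : 1 ≤ i) (ζ : ℂ) (hζ : IsPrimitiveRoot ζ (2 * N))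
    (a : ℕ → ℂ) (ha : a 0 = 1)
    (H : ∀ j < 2 * N, Lf (ζ ^ j) ^ (2 * mult m n j + 1) ∣
      Polynomial.C (ζ ^ (j * ((m + n) * N + i))) * Polynomial.X ^ i *
        (∑ s ∈ Finset.range (m + n + 1), Polynomial.C (a s) * Polynomial.X ^ ((m + n - s) * N))
        - ∑ s ∈ Finset.range (m + n + 1), Polynomial.C (a s) * Polynomial.X ^ (N * s)) (v : ℂ) :
    (∏ k ∈ Finset.range (2 * N), (1 - ζ ^ k * v)) *
        (∑ s ∈ Finset.range (m + n + 1),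
          a s * ((m + n - s) * N + i : ℕ) * (N * s : ℕ) * v ^ (N * s)) =
      ∑ k ∈ Finset.range (2 * N), (mult m n k : ℂ) *
        (∏ j ∈ (Finset.range (2 * N)).erase k, (1 - ζ ^ j * v)) *
        ((∑ s ∈ Finset.range (m + n + 1), a s * (N * s : ℕ) * v ^ (N * s)) - ζ ^ k * v *
          (∑ s ∈ Finset.range (m + n + 1), a s * ((m + n - s) * N + i : ℕ) * v ^ (N * s))) := by
  have h := core N m n i hN hi ζ hζ a ha _ _ rfl rfl H _ rfl
  have h := congrArg (Polynomial.eval v) h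
  have hc : ∀ s ∈ Finset.range (m + n + 1), (((m + n - s) * N + i : ℕ) : ℂ) =
      (((m + n) * N + i : ℕ) : ℂ) - (N * s : ℕ) := by
    intro s hs
    have := Finset.mem_range.mp hs
    push_cast [Nat.cast_sub (show s ≤ m + n by omega)]
    ring
  simp only [th_sum, Polynomial.eval_mul, Polynomial.eval_prod, Polynomial.eval_sub,
    Polynomial.eval_C, Polynomial.eval_X, Polynomial.eval_pow, Polynomial.eval_finsetSum, Lf,
    Polynomial.eval_one, Finset.mul_sum _ _ ((((m + n) * N + i : ℕ) : ℂ)),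
    ← Finset.sum_sub_distrib] at h
  convert h using 1
  · congr 1
    refine Finset.sum_congr rfl fun s hs => ?_
    rw [hc s hs]; ring
  · refine Finset.sum_congr rfl fun k hk => ?_
    congr 1
    congr 1
    · refine Finset.sum_congr rfl fun s hs => ?_
      ring
    · congr 1
      refine Finset.sum_congr rfl fun s hs => ?_
      rw [hc s hs]; ring

/-- To check `AnnL1` it suffices to check it at points off the coordinate axes. -/
lemma annL1_of_eval (N m n K : ℕ) (a : ℕ → ℂ) (e f : ℕ → ℕ)
    (h : ∀ x y : ℂ, x ≠ 0 → y ≠ 0 →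
      (∏ k ∈ Finset.range (2 * N), (eps N ^ k * y - x)) *
        (∑ s ∈ Finset.range K, a s * e s * f s * (x ^ e s * y ^ f s)) =
      ∑ k ∈ Finset.range (2 * N), (mult m n k : ℂ) *
        (∏ j ∈ (Finset.range (2 * N)).erase k, (eps N ^ j * y - x)) *
        (eps N ^ k * y * (∑ s ∈ Finset.range K, a s * e s * (x ^ e s * y ^ f s)) -
          x * (∑ s ∈ Finset.range K, a s * f s * (x ^ e s * y ^ f s)))) :
    AnnL1 N m n (∑ s ∈ Finset.range K, C (a s) * zP ^ e s * wP ^ f s) := by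
  unfold AnnL1
  set q : R2 := ∑ s ∈ Finset.range K, C (a s) * zP ^ e s * wP ^ f s with hq
  have pw : ∀ (x : ℂ) (k : ℕ), x * ((k : ℂ) * x ^ (k - 1)) = k * x ^ k := by
    intro x k
    rcases k with _ | k
    · simp
    · simp; ring
  have d0 : ∀ x y : ℂ, x * eval ![x, y] (pderiv 0 q) =
      ∑ s ∈ Finset.range K, a s * e s * (x ^ e s * y ^ f s) := by
    intro x y
    rw [hq, map_sum, map_sum, Finset.mul_sum]
    refine Finset.sum_congr rfl fun s _ => ?_
    simp [zP, wP, pderiv_X]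
    linear_combination (a s * y ^ f s) * pw x (e s)
  have d1 : ∀ x y : ℂ, y * eval ![x, y] (pderiv 1 q) =
      ∑ s ∈ Finset.range K, a s * f s * (x ^ e s * y ^ f s) := by
    intro x y
    rw [hq, map_sum, map_sum, Finset.mul_sum]
    refine Finset.sum_congr rfl fun s _ => ?_
    simp [zP, wP, pderiv_X]
    linear_combination (a s * x ^ e s) * pw y (f s)
  have d01 : ∀ x y : ℂ, x * y * eval ![x, y] (pderiv 0 (pderiv 1 q)) =
      ∑ s ∈ Finset.range K, a s * e s * f s * (x ^ e s * y ^ f s) := by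
    intro x y
    rw [hq, map_sum, map_sum, map_sum, Finset.mul_sum]
    refine Finset.sum_congr rfl fun s _ => ?_
    simp [zP, wP, pderiv_X]
    linear_combination (a s * (y * (f s * y ^ (f s - 1)))) * pw x (e s) +
      a s * e s * x ^ e s * pw y (f s)
  have cancel : ∀ p r : R2, (∀ x y : ℂ, x ≠ 0 → y ≠ 0 → eval ![x, y] p = eval ![x, y] r) →
      p = r := by
    intro p r hpr
    have h0 : (X 0 * X 1 : R2) ≠ 0 := mul_ne_zero (X_ne_zero 0) (X_ne_zero 1)
    apply mul_left_cancel₀ h0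
    apply MvPolynomial.funext
    intro g
    have hg : g = ![g 0, g 1] := by ext k; fin_cases k <;> rfl
    rw [hg]
    by_cases hx : g 0 = 0
    · simp [hx]
    by_cases hy : g 1 = 0
    · simp [hy]
    rw [map_mul, map_mul _ _ r, hpr _ _ hx hy]
  apply cancel
  intro x y hx hy
  have hxy := mul_ne_zero hx hy
  apply mul_left_cancel₀ hxy
  have h := h x y hx hy
  rw [← d0, ← d1, ← d01] at h
  simp only [map_mul, map_prod, map_sum, map_sub, eval_C, zP, wP, eval_X, Matrix.cons_val_zero,
    Matrix.cons_val_one]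
  rw [Finset.mul_sum]
  trans (∏ k ∈ Finset.range (2 * N), (eps N ^ k * y - x)) *
    (x * y * eval ![x, y] (pderiv 0 (pderiv 1 q)))
  · ring
  rw [h]
  refine Finset.sum_congr rfl fun k _ => ?_
  ring

set_option maxHeartbeats 1000000 in
theorem q1i_q2i_mHarmonic_L1 (N m n i : ℕ) (hN : 1 ≤ N) (hnm : n ≤ m)
    (hi1 : 1 ≤ i) (hi2 : i ≤ 2 * N - 1) (hiN : i ≠ N) :
    (∀ a : ℕ → ℂ, a 0 = 1 →
      IsQuasiInv N m n
        (∑ s ∈ Finset.range (m + n + 1),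
          C (a s) * zP ^ ((m + n - s) * N + i) * wP ^ (N * s)) →
      AnnL1 N m n
        (∑ s ∈ Finset.range (m + n + 1),
          C (a s) * zP ^ ((m + n - s) * N + i) * wP ^ (N * s))) ∧
    (∀ b : ℕ → ℂ, b 0 = 1 →
      IsQuasiInv N m n
        (∑ s ∈ Finset.range (m + n + 1),
          C (b s) * wP ^ ((m + n - s) * N + i) * zP ^ (N * s)) →
      AnnL1 N m n
        (∑ s ∈ Finset.range (m + n + 1),
          C (b s) * wP ^ ((m + n - s) * N + i) * zP ^ (N * s))) := by

  have hε := eps_prim N hN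
  have hε0 : eps N ≠ 0 := hε.ne_zero (by omega)
  have hεk : ∀ k, eps N ^ k ≠ 0 := fun k => pow_ne_zero _ hε0
  have hcard : ∀ k ∈ Finset.range (2 * N), ((Finset.range (2 * N)).erase k).card + 1 = 2 * N := by
    intro k hk
    rw [Finset.card_erase_add_one hk, Finset.card_range]
  have hε1 : ∀ j s : ℕ, (eps N ^ j) ^ (N * s) * (eps N ^ j) ^ (N * s) = 1 := by
    intro j s
    rw [← pow_add, ← pow_mul, show j * (N * s + N * s) = 2 * N * (j * s) by ring, pow_mul,
      hε.pow_eq_one, one_pow]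
  constructor
  · intro a ha hq
    apply annL1_of_eval
    have H : ∀ j < 2 * N, Lf (eps N ^ j) ^ (2 * mult m n j + 1) ∣
        Polynomial.C (eps N ^ (j * ((m + n) * N + i))) * Polynomial.X ^ i *
        (∑ s ∈ Finset.range (m + n + 1), Polynomial.C (a s) * Polynomial.X ^ ((m + n - s) * N))
        - ∑ s ∈ Finset.range (m + n + 1), Polynomial.C (a s) * Polynomial.X ^ (N * s) := by
      intro j hj
      have h := map_dvd (aeval (R := ℂ) ![(1 : Polynomial ℂ), Polynomial.X]) (hq j hj)
      convert h using 1
      · simp [Lf, zP, wP, aeval_C, Polynomial.algebraMap_eq]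
      · simp only [map_sub, map_sum, map_mul, map_pow, dihRefl, zP, wP, aeval_X, aeval_C,
          algHom_C, Polynomial.algebraMap_eq, MvPolynomial.algebraMap_eq]
        rw [Finset.mul_sum]
        refine congrArg₂ (· - ·) ?_ ?_
        · refine Finset.sum_congr rfl fun s hs => ?_
          obtain ⟨r, hr⟩ : ∃ r, m + n = s + r :=
            ⟨m + n - s, by have := Finset.mem_range.mp hs; omega⟩
          have hr' : m + n - s = r := by omega
          rw [hr', hr]
          have key : eps N ^ (j * ((s + r) * N + i)) =
              (eps N ^ j) ^ (r * N + i) * (eps N ^ (-(j : ℤ))) ^ (N * s) := by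
            rw [zpow_neg, zpow_natCast, inv_pow, eq_mul_inv_iff_mul_eq₀ (pow_ne_zero _ (hεk j)),
              pow_mul, show (s + r) * N + i = (r * N + i) + N * s by ring, pow_add, mul_assoc,
              hε1, mul_one]
          have key' := congrArg Polynomial.C key
          simp only [Polynomial.C_mul, Polynomial.C_pow] at key'
          simp [aeval_C]
          rw [key']
          simp
          ring
        · refine Finset.sum_congr rfl fun s hs => ?_
          simp
    have h := core_eval N m n i hN hi1 (eps N) hε a ha H
    intro x y hx hy
    have h := h (y / x)
    have hL : ∀ k, eps N ^ k * y - x = (-x) * (1 - eps N ^ k * (y / x)) := by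
      intro k; field_simp; ring
    have hp : ∀ s ∈ Finset.range (m + n + 1), x ^ ((m + n - s) * N + i) * y ^ (N * s) =
        x ^ ((m + n) * N + i) * (y / x) ^ (N * s) := by
      intro s hs
      obtain ⟨r, hr⟩ : ∃ r, m + n = s + r :=
        ⟨m + n - s, by have := Finset.mem_range.mp hs; omega⟩
      have hr' : m + n - s = r := by omega
      rw [hr', hr, div_pow]
      field_simp
      ring
    have hs : ∀ c : ℕ → ℂ, ∑ s ∈ Finset.range (m + n + 1),
        c s * (x ^ ((m + n - s) * N + i) * y ^ (N * s)) =
        x ^ ((m + n) * N + i) * ∑ s ∈ Finset.range (m + n + 1), c s * (y / x) ^ (N * s) := by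
      intro c
      rw [Finset.mul_sum]
      refine Finset.sum_congr rfl fun s hs => ?_
      rw [hp s hs]; ring
    rw [hs, hs, hs]
    simp only [hL, Finset.prod_mul_distrib, Finset.prod_const, Finset.card_range]
    trans (-x) ^ (2 * N) * x ^ ((m + n) * N + i) *
        ((∏ k ∈ Finset.range (2 * N), (1 - eps N ^ k * (y / x))) *
        (∑ s ∈ Finset.range (m + n + 1),
          a s * ((m + n - s) * N + i : ℕ) * (N * s : ℕ) * (y / x) ^ (N * s)))
    · ring
    rw [h, Finset.mul_sum]
    refine Finset.sum_congr rfl fun k hk => ?_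
    have hy' : y = x * (y / x) := by field_simp
    generalize y / x = v at *
    subst hy'
    have hpw : (-x) ^ (2 * N) = (-x) ^ ((Finset.range (2 * N)).erase k).card * (-x) := by
      rw [← pow_succ, hcard k hk]
    rw [hpw]
    ring
  · intro a ha hq
    have hswap : (∑ s ∈ Finset.range (m + n + 1),
          C (a s) * wP ^ ((m + n - s) * N + i) * zP ^ (N * s)) =
        (∑ s ∈ Finset.range (m + n + 1),
          C (a s) * zP ^ (N * s) * wP ^ ((m + n - s) * N + i)) := by
      refine Finset.sum_congr rfl fun s hs => ?_
      ring
    rw [hswap] at hq ⊢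
    apply annL1_of_eval
    have H : ∀ j < 2 * N, Lf ((eps N)⁻¹ ^ j) ^ (2 * mult m n j + 1) ∣
        Polynomial.C ((eps N)⁻¹ ^ (j * ((m + n) * N + i))) * Polynomial.X ^ i *
        (∑ s ∈ Finset.range (m + n + 1), Polynomial.C (a s) * Polynomial.X ^ ((m + n - s) * N))
        - ∑ s ∈ Finset.range (m + n + 1), Polynomial.C (a s) * Polynomial.X ^ (N * s) := by
      intro j hj
      have h := map_dvd (aeval (R := ℂ) ![Polynomial.X, (1 : Polynomial ℂ)]) (hq j hj)
      have h0 : Lf ((eps N)⁻¹ ^ j) ^ (2 * mult m n j + 1) ∣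
          (Polynomial.X - Polynomial.C (eps N ^ j)) ^ (2 * mult m n j + 1) := by
        apply pow_dvd_pow_of_dvd
        refine ⟨- Polynomial.C (eps N ^ j), ?_⟩
        have : Polynomial.C ((eps N)⁻¹ ^ j) * Polynomial.C (eps N ^ j) = 1 := by
          rw [← Polynomial.C_mul, ← mul_pow, inv_mul_cancel₀ hε0, one_pow, Polynomial.C_1]
        unfold Lf
        linear_combination (-Polynomial.X) * this
      refine h0.trans ?_
      convert h using 1
      · simp [zP, wP, aeval_C, Polynomial.algebraMap_eq]
      · simp only [map_sub, map_sum, map_mul, map_pow, dihRefl, zP, wP, aeval_X, aeval_C,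
          algHom_C, Polynomial.algebraMap_eq, MvPolynomial.algebraMap_eq]
        rw [Finset.mul_sum]
        refine congrArg₂ (· - ·) ?_ ?_
        · refine Finset.sum_congr rfl fun s hs => ?_
          obtain ⟨r, hr⟩ : ∃ r, m + n = s + r :=
            ⟨m + n - s, by have := Finset.mem_range.mp hs; omega⟩
          have hr' : m + n - s = r := by omega
          rw [hr', hr]
          have key : (eps N)⁻¹ ^ (j * ((s + r) * N + i)) =
              (eps N ^ (-(j : ℤ))) ^ (r * N + i) * (eps N ^ j) ^ (N * s) := by
            rw [zpow_neg, zpow_natCast, inv_pow, inv_pow,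
              pow_mul, show (s + r) * N + i = (r * N + i) + N * s by ring, pow_add, mul_inv,
              inv_eq_of_mul_eq_one_left (hε1 j s)]
          have key' := congrArg Polynomial.C key
          simp only [Polynomial.C_mul, Polynomial.C_pow] at key'
          simp [aeval_C]
          rw [key']
          simp
          ring
        · refine Finset.sum_congr rfl fun s hs => ?_
          simp
    have h := core_eval N m n i hN hi1 (eps N)⁻¹ hε.inv a ha H
    intro x y hx hy
    have h := h (x / y)
    have hinv : ∀ k, eps N ^ k * (eps N)⁻¹ ^ k = 1 := by
      intro k; rw [← mul_pow, mul_inv_cancel₀ hε0, one_pow]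
    have hL : ∀ k, eps N ^ k * y - x = (eps N ^ k * y) * (1 - (eps N)⁻¹ ^ k * (x / y)) := by
      intro k
      have : x = y * (x / y) := by field_simp
      linear_combination (-1 : ℂ) * this + (y * (x / y)) * hinv k
    have hp : ∀ s ∈ Finset.range (m + n + 1), x ^ (N * s) * y ^ ((m + n - s) * N + i) =
        y ^ ((m + n) * N + i) * (x / y) ^ (N * s) := by
      intro s hs
      obtain ⟨r, hr⟩ : ∃ r, m + n = s + r :=
        ⟨m + n - s, by have := Finset.mem_range.mp hs; omega⟩
      have hr' : m + n - s = r := by omega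
      rw [hr', hr, div_pow]
      field_simp
      ring
    have hs : ∀ c : ℕ → ℂ, ∑ s ∈ Finset.range (m + n + 1),
        c s * (x ^ (N * s) * y ^ ((m + n - s) * N + i)) =
        y ^ ((m + n) * N + i) * ∑ s ∈ Finset.range (m + n + 1), c s * (x / y) ^ (N * s) := by
      intro c
      rw [Finset.mul_sum]
      refine Finset.sum_congr rfl fun s hs => ?_
      rw [hp s hs]; ring
    rw [hs, hs, hs]
    have hcomm : ∑ s ∈ Finset.range (m + n + 1),
          a s * (N * s : ℕ) * ((m + n - s) * N + i : ℕ) * (x / y) ^ (N * s) =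
        ∑ s ∈ Finset.range (m + n + 1),
          a s * ((m + n - s) * N + i : ℕ) * (N * s : ℕ) * (x / y) ^ (N * s) := by
      refine Finset.sum_congr rfl fun s hs => ?_
      ring
    rw [hcomm]
    simp only [hL]
    rw [Finset.prod_mul_distrib]
    trans (∏ k ∈ Finset.range (2 * N), (eps N ^ k * y)) * y ^ ((m + n) * N + i) *
        ((∏ k ∈ Finset.range (2 * N), (1 - (eps N)⁻¹ ^ k * (x / y))) *
        (∑ s ∈ Finset.range (m + n + 1),
          a s * ((m + n - s) * N + i : ℕ) * (N * s : ℕ) * (x / y) ^ (N * s)))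
    · ring
    rw [h, Finset.mul_sum]
    refine Finset.sum_congr rfl fun k hk => ?_
    rw [← Finset.mul_prod_erase _ (fun k => eps N ^ k * y) hk,
      Finset.prod_mul_distrib (f := fun j => eps N ^ j * y)]
    have hx' : x = y * (x / y) := by field_simp
    generalize x / y = v at *
    subst hx'
    generalize (∑ s ∈ Finset.range (m + n + 1), a s * ((m + n - s) * N + i : ℕ) * v ^ (N * s)) = S1
    generalize (∑ s ∈ Finset.range (m + n + 1), a s * (N * s : ℕ) * v ^ (N * s)) = S2
    generalize (∏ j ∈ (Finset.range (2 * N)).erase k, (1 - (eps N)⁻¹ ^ j * v)) = P1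
    generalize (∏ j ∈ (Finset.range (2 * N)).erase k, (eps N ^ j * y)) = P2
    generalize y ^ ((m + n) * N + i) = Y
    have hk1 := hinv k
    generalize (eps N)⁻¹ ^ k = F at *
    linear_combination (-(mult m n k : ℂ) * P1 * P2 * Y * y * v * S1) * hk1
end
end
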